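/- arXiv:0906.2450 — 3 statements merged into one kernel-verified Lean document; each statement's English description precedes it below -/
import Mathlib

section
/- For every nonnegative integer n, there exist integers x, y, z such that n = p_5(x) + 3·p_5(y) + 3·p_5(z), where p_5(x) = (3x² − x)/2. In other words, the sum p_5 + 3p_5 + 3p_5 is universal over ℤ. -/
/-- Generalized pentagonal number: `p₅(x) = (3x² − x)/2`. -/
def p5 (x : ℤ) : ℤ := (3 * x ^ 2 - x) / 2

def RepG (a b c d e f : ℤ) : Prop := ∀ x y z : ℤ, ∃ u v w : ℤ,
  a*x^2+b*y^2+c*z^2+d*x*y+e*x*z+f*y*z = u^2+u*v+v^2+w^2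

lemma RepG.shiftXY {a b c d e f : ℤ} (k : ℤ)
    (h : RepG a (b+k*d+k^2*a) c (d+2*k*a) e (f+k*e)) : RepG a b c d e f := by
  intro x y z
  obtain ⟨u, v, w, h⟩ := h (x-k*y) y z
  exact ⟨u, v, w, by rw [← h]; ring⟩

lemma RepG.shiftXZ {a b c d e f : ℤ} (k : ℤ)
    (h : RepG a b (c+k*e+k^2*a) d (e+2*k*a) (f+k*d)) : RepG a b c d e f := by
  intro x y z
  obtain ⟨u, v, w, h⟩ := h (x-k*z) y z
  exact ⟨u, v, w, by rw [← h]; ring⟩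

lemma RepG.shiftYZ {a b c d e f : ℤ} (k : ℤ)
    (h : RepG a b (c+k*f+k^2*b) d (e+k*d) (f+2*k*b)) : RepG a b c d e f := by
  intro x y z
  obtain ⟨u, v, w, h⟩ := h x (y-k*z) z
  exact ⟨u, v, w, by rw [← h]; ring⟩

lemma RepG.swapXY {a b c d e f : ℤ} (h : RepG b a c d f e) : RepG a b c d e f := by
  intro x y z
  obtain ⟨u, v, w, h⟩ := h y x z
  exact ⟨u, v, w, by rw [← h]; ring⟩

lemma RepG.swapYZ {a b c d e f : ℤ} (h : RepG a c b e d f) : RepG a b c d e f := by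
  intro x y z
  obtain ⟨u, v, w, h⟩ := h x z y
  exact ⟨u, v, w, by rw [← h]; ring⟩

lemma round_exists (A B : ℤ) (hA : 0 < A) : ∃ k : ℤ, -A ≤ 2*(B+k*A) ∧ 2*(B+k*A) ≤ A := by
  refine ⟨-((2*B+A)/(2*A)), ?_⟩
  have h1 := Int.emod_add_mul_ediv (2*B+A) (2*A)
  have h2 := Int.emod_nonneg (2*B+A) (b := 2*A) (by omega)
  have h3 := Int.emod_lt_of_pos (2*B+A) (b := 2*A) (by omega)
  constructor <;> nlinarith

/-- the fully reduced case -/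
lemma RepG.base {b c d e f : ℤ} (hb : 1 ≤ b) (hA : 4*b-d^2 ≤ 4) (hd : -1 ≤ d) (hd' : d ≤ 1)
    (he : -1 ≤ e) (he' : e ≤ 1)
    (hB : -(4*b-d^2) ≤ 2*(2*f-d*e)) (hB' : 2*(2*f-d*e) ≤ 4*b-d^2)
    (hdet : (4*b-d^2)*(4*c-e^2) = 12 + (2*f-d*e)^2) : RepG 1 b c d e f := by
  have hb1 : b = 1 := by nlinarith
  subst hb1
  have hf : -2 ≤ f := by nlinarith
  have hf' : f ≤ 2 := by nlinarith
  intro x y z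
  interval_cases d <;> interval_cases e <;> interval_cases f <;> (try norm_num at hB) <;>
    (try norm_num at hB') <;> (try norm_num at hdet) <;>
    first
    | (exfalso; omega)
    | (obtain rfl : c = 1 := by omega
       first
       | exact ⟨x, y, z, by ring1⟩
       | exact ⟨x, -y, z, by ring1⟩
       | exact ⟨x, z, y, by ring1⟩
       | exact ⟨x, -z, y, by ring1⟩
       | exact ⟨y, z, x, by ring1⟩
       | exact ⟨y, -z, x, by ring1⟩)

lemma RepG.main : ∀ (n m : ℕ) (a b c d e f : ℤ), a.toNat = n → (4*a*b-d^2).toNat = m →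
    0 < a → 0 < 4*a*b-d^2 → 4*a*b*c+d*e*f-a*f^2-b*e^2-c*d^2 = 3 → RepG a b c d e f := by
  intro n
  induction n using Nat.strong_induction_on with
  | _ n ihn =>
  intro m
  induction m using Nat.strong_induction_on with
  | _ m ihm =>
  intro a b c d e f hn hm ha hA hD
  obtain ⟨k, hk1, hk2⟩ := round_exists (2*a) d (by omega)
  apply RepG.shiftXY k
  obtain ⟨b', hb'⟩ : ∃ t, t = b+k*d+k^2*a := ⟨_, rfl⟩
  obtain ⟨d', hd'⟩ : ∃ t, t = d+2*k*a := ⟨_, rfl⟩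
  obtain ⟨f', hf'⟩ : ∃ t, t = f+k*e := ⟨_, rfl⟩
  have eA : 4*a*b-d^2 = 4*a*b'-d'^2 := by rw [hb', hd']; ring
  have eD : 4*a*b'*c+d'*e*f'-a*f'^2-b'*e^2-c*d'^2 = 3 := by
    rw [← hD, hb', hd', hf']; ring
  have hd1 : -a ≤ d' := by rw [hd']; linarith
  have hd2 : d' ≤ a := by rw [hd']; linarith
  rw [← hb', ← hd', ← hf']
  rw [eA] at hm hA
  clear hb' hd' hf' eA hD hk1 hk2
  clear b d f
  obtain ⟨k, hk1, hk2⟩ := round_exists (4*a*b'-d'^2) (2*a*f'-d'*e) hA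
  apply RepG.shiftYZ k
  obtain ⟨c', hc'⟩ : ∃ t, t = c+k*f'+k^2*b' := ⟨_, rfl⟩
  obtain ⟨e', he'⟩ : ∃ t, t = e+k*d' := ⟨_, rfl⟩
  obtain ⟨f, hf⟩ : ∃ t, t = f'+2*k*b' := ⟨_, rfl⟩
  rw [← hc', ← he', ← hf]
  have eD' : 4*a*b'*c'+d'*e'*f-a*f^2-b'*e'^2-c'*d'^2 = 3 := by
    rw [← eD, hc', he', hf]; ring
  have eB : 2*a*f'-d'*e + k*(4*a*b'-d'^2) = 2*a*f-d'*e' := by rw [he', hf]; ring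
  rw [eB] at hk1 hk2
  clear hc' he' hf eB eD
  clear k f' e c
  obtain ⟨k, hl1, hl2⟩ := round_exists (2*a) e' (by omega)
  apply RepG.shiftXZ k
  obtain ⟨c, hc⟩ : ∃ t, t = c'+k*e'+k^2*a := ⟨_, rfl⟩
  obtain ⟨e, he⟩ : ∃ t, t = e'+2*k*a := ⟨_, rfl⟩
  obtain ⟨f', hf'⟩ : ∃ t, t = f+k*d' := ⟨_, rfl⟩
  rw [← hc, ← he, ← hf']
  have eD : 4*a*b'*c+d'*e*f'-a*f'^2-b'*e^2-c*d'^2 = 3 := by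
    rw [← eD', hc, he, hf']; ring
  have eB : 2*a*f-d'*e' = 2*a*f'-d'*e := by rw [he, hf']; ring
  have he1 : -a ≤ e := by rw [he]; linarith
  have he2 : e ≤ a := by rw [he]; linarith
  rw [eB] at hk1 hk2
  clear hc he hf' eB eD' hl1 hl2
  clear k f e' c'
  have hdet : (4*a*b'-d'^2)*(4*a*c-e^2) = 12*a + (2*a*f'-d'*e)^2 := by
    linear_combination 4*a*eD
  have hC : 0 < 4*a*c-e^2 := by
    by_contra h
    push Not at h
    nlinarith [sq_nonneg (2*a*f'-d'*e)]
  by_cases h1 : 4*a*c-e^2 < 4*a*b'-d'^2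
  · apply RepG.swapYZ
    exact ihm _ (by omega) a c b' e d' f' hn rfl ha hC (by linarith)
  have hb : 0 < b' := by
    by_contra h
    push Not at h
    nlinarith [sq_nonneg d']
  by_cases h2 : b' < a
  · apply RepG.swapXY
    exact ihn _ (by omega) _ b' a c d' f' e rfl rfl hb (by linarith) (by linarith)
  push Not at h1 h2
  obtain ⟨A, hAA⟩ : ∃ t, t = 4*a*b'-d'^2 := ⟨_, rfl⟩
  obtain ⟨B, hBB⟩ : ∃ t, t = 2*a*f'-d'*e := ⟨_, rfl⟩
  obtain ⟨C, hCC⟩ : ∃ t, t = 4*a*c-e^2 := ⟨_, rfl⟩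
  have hA16 : A^2 ≤ 16*a := by
    rw [← hAA, ← hBB, ← hCC] at hdet
    rw [← hAA, ← hBB] at hk1 hk2
    rw [← hAA] at hA
    rw [← hAA, ← hCC] at h1
    have : 4*B^2 ≤ A^2 := by nlinarith
    nlinarith
  have h3 : 3*a^2 ≤ A := by
    have : d'^2 ≤ a^2 := by nlinarith
    nlinarith
  have ha1 : a = 1 := by
    by_contra hne
    have h2a : 2 ≤ a := by omega
    have h4 : 9*a^4 ≤ 16*a := by nlinarith
    have h5 : 8*a ≤ a^4 := by
      have : 4 ≤ a^2 := by nlinarith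
      nlinarith
    linarith
  subst ha1
  have hA4 : A ≤ 4 := by nlinarith
  rw [mul_one] at *
  exact RepG.base (by linarith) (by linarith) hd1 hd2 he1 he2
    (by linarith) (by linarith) (by linear_combination hdet)

lemma RepG.of_disc {a b c d e f : ℤ} (ha : 0 < a) (hA : 0 < 4*a*b-d^2)
    (hD : 4*a*b*c+d*e*f-a*f^2-b*e^2-c*d^2 = 3) : RepG a b c d e f :=
  RepG.main _ _ a b c d e f rfl rfl ha hA hD

open NumberTheorySymbols in
lemma exists_prime_data (N : ℕ) (hN : N % 24 = 7) :
    ∃ (p : ℕ) (D a d : ℤ), 0 < D ∧ 0 < p ∧ 4*N*D = 3*p+1 ∧ a*p - d^2 = D := by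
  obtain ⟨r, hr⟩ : ∃ r, 3*r+1 = 4*N := ⟨(4*N-1)/3, by omega⟩
  have hcop : r.Coprime (4*N) := by
    rw [← hr]
    simp
  obtain ⟨p, hpr, hp, hmod⟩ := Nat.forall_exists_prime_gt_and_modEq r (q := 4*N) (by omega) hcop
  obtain ⟨k, hk⟩ := (Nat.modEq_iff_dvd' hpr.le).1 hmod.symm
  have hpk : p = r + 4*N*k := by omega
  have hD : 4*N*(1+3*k) = 3*p+1 := by rw [hpk]; linarith
  have hp4 : p % 4 = 1 := by
    have : 3*p+1 = 4*(N*(1+3*k)) := by linarith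
    omega
  haveI : Fact p.Prime := ⟨hp⟩
  have hNodd : Odd N := Nat.odd_iff.2 (by omega)
  have j1 : J(3 | N) = -1 := by
    have := jacobiSym.quadratic_reciprocity_three_mod_four (a := 3) (b := N) (by norm_num) (by omega)
    have h2 : J((N:ℤ) | 3) = J(1 | 3) := jacobiSym.mod_left' (by omega)
    rw [h2, jacobiSym.one_left] at this
    exact_mod_cast this
  have j2 : J(-1 | N) = -1 := by
    rw [jacobiSym.at_neg_one hNodd, ZMod.χ₄_nat_three_mod_four (by omega)]
  have j3 : J(3 * (p:ℤ) | N) = J(-1 | N) := by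
    apply jacobiSym.mod_left'
    apply Int.ModEq.symm
    apply (Int.modEq_iff_dvd).2
    refine ⟨4*(1+3*k), ?_⟩
    have : (4*N*(1+3*k) : ℤ) = 3*p+1 := by exact_mod_cast hD
    linarith
  rw [jacobiSym.mul_left, j1, j2] at j3
  have j4 : J((p:ℤ) | N) = 1 := by linarith
  have j5 : J((N:ℤ) | p) = 1 := by
    rw [jacobiSym.quadratic_reciprocity_one_mod_four' hNodd hp4, j4]
  have s1 : IsSquare ((N:ℤ) : ZMod p) := ZMod.isSquare_of_jacobiSym_eq_one j5
  have s2 : IsSquare (-1 : ZMod p) := ZMod.exists_sq_eq_neg_one_iff.2 (by omega)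
  obtain ⟨u, hu⟩ := s1
  obtain ⟨i, hi⟩ := s2
  have hDz : (4*N*(1+3*k) : ZMod p) = 1 := by
    have : ((4*N*(1+3*k) : ℕ) : ZMod p) = ((3*p+1 : ℕ) : ZMod p) := by rw [hD]
    push_cast at this
    simpa using this
  obtain ⟨w, hw⟩ : ∃ w : ZMod p, w = i*u*2*(1+3*k) := ⟨_, rfl⟩
  have hw2 : w^2 + (1+3*k) = 0 := by
    push_cast at hu
    have : w^2 = -((4*N*(1+3*k))*(1+3*k)) := by
      rw [hw, hu]
      linear_combination (-(4*u*u*(1+3*k)^2 : ZMod p)) * hi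
    rw [this, hDz]; ring
  have hdvd : (p:ℤ) ∣ (w.val:ℤ)^2 + (1+3*k) := by
    rw [← ZMod.intCast_zmod_eq_zero_iff_dvd]
    push_cast
    rw [ZMod.natCast_zmod_val]
    exact hw2
  obtain ⟨a, ha⟩ := hdvd
  refine ⟨p, 1+3*k, a, w.val, by positivity, hp.pos, by exact_mod_cast hD, by linarith⟩

lemma three_mul_rep (N : ℕ) (hN : N % 24 = 7) :
    ∃ u v w : ℤ, 3*(N:ℤ) = u^2+u*v+v^2+w^2 := by
  obtain ⟨p, D, a, d, hD, hp, h1, h2⟩ := exists_prime_data N hN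
  have hp' : (0:ℤ) < p := by exact_mod_cast hp
  have ha : 0 < a := by
    by_contra h
    push Not at h
    nlinarith [sq_nonneg d]
  have := RepG.of_disc (a := a) (b := p) (c := 3*N) (d := 2*d) (e := 3) (f := 0) ha
    (by linarith) (by linear_combination 12*N*h2+3*h1)
  obtain ⟨u, v, w, h⟩ := this 0 0 1
  exact ⟨u, v, w, by linarith⟩

lemma three_dvd_of_sq_add {x y : ℤ} (h : (3:ℤ) ∣ x^2+y^2) : 3 ∣ x ∧ 3 ∣ y := by
  have hx : x % 3 = 0 ∨ x % 3 = 1 ∨ x % 3 = 2 := by omega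
  have hy : y % 3 = 0 ∨ y % 3 = 1 ∨ y % 3 = 2 := by omega
  have h' := Int.emod_eq_zero_of_dvd h
  rcases hx with hx | hx | hx <;> rcases hy with hy | hy | hy <;>
    simp [pow_two, Int.add_emod, Int.mul_emod, hx, hy] at h' ⊢ <;> omega

/-- a norm of Eisenstein integers, multiplied by four, divided back. -/
lemma quarter {v s K : ℤ} (h : v^2+3*s^2 = 4*K) : ∃ a b : ℤ, K = a^2+3*b^2 := by
  have hpar : (v - s) % 2 = 0 := by
    have : (v-s)*(v+s) = 4*(K-s^2) := by linear_combination h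
    by_contra hne
    have h1 : Odd (v-s) := Int.odd_iff.2 (by omega)
    have h2 : Odd (v+s) := Int.odd_iff.2 (by omega)
    have h3 := Int.odd_iff.1 (h1.mul h2)
    omega
  rcases Int.emod_two_eq_zero_or_one s with hs | hs
  · obtain ⟨s', rfl⟩ : ∃ t, s = 2*t := ⟨s/2, by omega⟩
    obtain ⟨v', rfl⟩ : ∃ t, v = 2*t := ⟨v/2, by omega⟩
    exact ⟨v', s', by linarith⟩
  · rcases (by omega : (v-s) % 4 = 0 ∨ (v+s) % 4 = 0) with h4 | h4
    · obtain ⟨t, ht⟩ : ∃ t, v = s+4*t := ⟨(v-s)/4, by omega⟩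
      subst ht
      exact ⟨s+t, t, by linarith⟩
    · obtain ⟨t, ht⟩ : ∃ t, v = -s+4*t := ⟨(v+s)/4, by omega⟩
      subst ht
      exact ⟨-s+t, t, by linarith⟩

lemma rep133 (N : ℕ) (hN : N % 24 = 7) : ∃ a b c : ℤ, (N:ℤ) = a^2+3*b^2+3*c^2 := by
  obtain ⟨u, v, w, h⟩ := three_mul_rep N hN
  have hd : (3:ℤ) ∣ (2*u+v)^2+w^2 := ⟨4*N - v^2 - w^2, by linarith⟩
  obtain ⟨⟨s, hs⟩, ⟨t, rfl⟩⟩ := three_dvd_of_sq_add hd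
  obtain rfl : v = 3*s-2*u := by linarith
  obtain ⟨a, b, hab⟩ := quarter (v := 3*s-2*u) (s := s) (K := N-3*t^2) (by linarith)
  exact ⟨a, b, t, by linarith⟩

lemma sq_emod_eight (x : ℤ) : (x % 2 = 1 ∧ x^2 % 8 = 1) ∨ (x % 4 = 0 ∧ x^2 % 8 = 0) ∨
    (x % 4 = 2 ∧ x^2 % 8 = 4) := by
  have : x % 8 = 0 ∨ x % 8 = 1 ∨ x % 8 = 2 ∨ x % 8 = 3 ∨ x % 8 = 4 ∨ x % 8 = 5 ∨ x % 8 = 6 ∨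
    x % 8 = 7 := by omega
  rcases this with h | h | h | h | h | h | h | h <;> simp [pow_two, Int.mul_emod, h] <;> omega

lemma rep133_odd (N : ℕ) (hN : N % 24 = 7) : ∃ a b c : ℤ, (N:ℤ) = a^2+3*b^2+3*c^2 ∧
    a % 2 = 1 ∧ b % 2 = 1 ∧ c % 2 = 1 := by
  obtain ⟨a, b, c, h⟩ := rep133 N hN
  have key : ∀ a b c : ℤ, (N:ℤ) = a^2+3*b^2+3*c^2 → a % 2 = 0 → b % 2 = 0 → c % 2 = 1 →
      ∃ a b c : ℤ, (N:ℤ) = a^2+3*b^2+3*c^2 ∧ a % 2 = 1 ∧ b % 2 = 1 ∧ c % 2 = 1 := by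
    intro a b c h ha hb hc
    have h1 := sq_emod_eight a
    have h2 := sq_emod_eight b
    have h3 := sq_emod_eight c
    have hpar : (a/2 - b/2) % 2 = 1 := by omega
    obtain ⟨a', rfl⟩ : ∃ t, a = 2*t := ⟨a/2, by omega⟩
    obtain ⟨b', rfl⟩ : ∃ t, b = 2*t := ⟨b/2, by omega⟩
    exact ⟨a'+3*b', a'-b', c, by rw [h]; ring, by omega, by omega, hc⟩
  have h1 := sq_emod_eight a
  have h2 := sq_emod_eight b
  have h3 := sq_emod_eight c
  rcases (by omega : (a % 2 = 1 ∧ b % 2 = 1 ∧ c % 2 = 1) ∨ (a % 2 = 0 ∧ b % 2 = 0 ∧ c % 2 = 1) ∨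
    (a % 2 = 0 ∧ c % 2 = 0 ∧ b % 2 = 1)) with ⟨x, y, z⟩ | ⟨x, y, z⟩ | ⟨x, y, z⟩
  · exact ⟨a, b, c, h, x, y, z⟩
  · exact key a b c h x y z
  · exact key a c b (by linarith) x y z

/-- rotate an odd pair to make the second entry prime to three -/
lemma rotate (a b : ℤ) (ha : a % 2 = 1) (hb : b % 2 = 1) (ha3 : a % 3 ≠ 0) :
    ∃ a' b' : ℤ, a^2+3*b^2 = a'^2+3*b'^2 ∧ a' % 2 = 1 ∧ b' % 2 = 1 ∧ a' % 3 ≠ 0 ∧ b' % 3 ≠ 0 := by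
  by_cases hb3 : b % 3 = 0
  · rcases (by omega : (a-b) % 4 = 2 ∨ (a+b) % 4 = 2) with h | h
    · obtain ⟨t, ht⟩ : ∃ t, a = b+2*t := ⟨(a-b)/2, by omega⟩
      subst ht
      exact ⟨t+2*b, t, by ring, by omega, by omega, by omega, by omega⟩
    · obtain ⟨t, ht⟩ : ∃ t, a = -b+2*t := ⟨(a+b)/2, by omega⟩
      subst ht
      exact ⟨t-2*b, t, by ring, by omega, by omega, by omega, by omega⟩
  · exact ⟨a, b, rfl, ha, hb, ha3, hb3⟩

lemma p5_of_sq (a : ℤ) (h2 : a % 2 = 1) (h3 : a % 3 ≠ 0) : ∃ x : ℤ, 24 * p5 x + 1 = a^2 := by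
  have key : ∀ x : ℤ, 24 * p5 x + 1 = (6*x-1)^2 := by
    intro x
    have hd : (2:ℤ) ∣ 3*x^2-x := by
      rcases Int.even_or_odd' x with ⟨k, rfl | rfl⟩
      · exact ⟨6*k^2-k, by ring⟩
      · exact ⟨6*k^2+5*k+1, by ring⟩
    have := Int.mul_ediv_cancel' hd
    unfold p5
    linear_combination 12*this
  rcases (by omega : a % 6 = 1 ∨ a % 6 = 5) with h | h
  · obtain ⟨x, hx⟩ : ∃ x, a = -(6*x-1) := ⟨(1-a)/6, by omega⟩
    exact ⟨x, by rw [key, hx]; ring⟩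
  · obtain ⟨x, hx⟩ : ∃ x, a = 6*x-1 := ⟨(a+1)/6, by omega⟩
    exact ⟨x, by rw [key, hx]⟩

theorem p5_add_3p5_add_3p5_universal (n : ℕ) :
    ∃ x y z : ℤ, (n : ℤ) = p5 x + 3 * p5 y + 3 * p5 z := by
  obtain ⟨a, b, c, h, ha, hb, hc⟩ := rep133_odd (24*n+7) (by omega)
  push_cast at h
  have ha3 : a % 3 ≠ 0 := by
    intro h0
    obtain ⟨t, rfl⟩ : ∃ t, a = 3*t := ⟨a/3, by omega⟩
    have : (24*n+7 : ℤ) = 3*(3*t^2+b^2+c^2) := by linarith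
    omega
  obtain ⟨a1, b1, h1, ha1, hb1, ha13, hb13⟩ := rotate a b ha hb ha3
  obtain ⟨a2, c2, h2, ha2, hc2, ha23, hc23⟩ := rotate a1 c ha1 hc ha13
  obtain ⟨x, hx⟩ := p5_of_sq a2 ha2 ha23
  obtain ⟨y, hy⟩ := p5_of_sq b1 hb1 hb13
  obtain ⟨z, hz⟩ := p5_of_sq c2 hc2 hc23
  exact ⟨x, y, z, by linarith⟩
end

section
/- For every nonnegative integer n, there exist integers x, y, z such that n = p_5(x) + 3·p_5(y) + 9·p_5(z), where p_5(x) = (3x² − x)/2. In other words, the sum p_5 + 3p_5 + 9p_5 is universal over ℤ. -/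
/-- `n` is represented by one of the two classes of ternary forms of determinant 3. -/
def RepD3 (n : ℤ) : Prop :=
  ∃ X Y Z : ℤ, n = X ^ 2 + Y ^ 2 + 3 * Z ^ 2 ∨ n = X ^ 2 + 2 * (Y ^ 2 + Y * Z + Z ^ 2)

/-- every value of the ternary form with the given Gram matrix satisfies `RepD3` -/
def GoodForm (a b c d e h : ℤ) : Prop :=
  ∀ x y z : ℤ, RepD3 (a * x ^ 2 + 2 * b * x * y + c * y ^ 2 + 2 * d * x * z + 2 * e * y * z
    + h * z ^ 2)

theorem exists_round (a b : ℤ) (ha : 0 < a) : ∃ k : ℤ, 4 * (b + a * k) ^ 2 ≤ a ^ 2 := by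
  refine ⟨-((2 * b + a) / (2 * a)), ?_⟩
  have h1 := Int.emod_nonneg (2 * b + a) (b := 2 * a) (by omega)
  have h2 := Int.emod_lt_of_pos (2 * b + a) (b := 2 * a) (by omega)
  have h3 := Int.emod_add_mul_ediv (2 * b + a) (2 * a)
  generalize (2 * b + a) / (2 * a) = q at *
  generalize (2 * b + a) % (2 * a) = r at *
  have h4 : 2 * (b + a * -q) = r - a := by linarith
  have h5 : 4 * (b + a * -q) ^ 2 = (r - a) ^ 2 := by rw [← h4]; ring
  rw [h5]
  nlinarith

theorem shear_yz {a b c d e h : ℤ} (k : ℤ)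
    (H : GoodForm a b c (d + b * k) (e + c * k) (h + 2 * e * k + c * k ^ 2)) :
    GoodForm a b c d e h := by
  intro x y z
  have := H x (y - k * z) z
  convert this using 1
  ring

theorem shear_xy {a b c d e h : ℤ} (k : ℤ)
    (H : GoodForm a (b + a * k) (c + 2 * b * k + a * k ^ 2) d (e + d * k) h) :
    GoodForm a b c d e h := by
  intro x y z
  have := H (x - k * y) y z
  convert this using 1
  ring

theorem swap_yz {a b c d e h : ℤ} (H : GoodForm a d h b e c) : GoodForm a b c d e h := by
  intro x y z
  have := H x z y
  convert this using 1
  ring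

theorem swap_xy {a b c d e h : ℤ} (H : GoodForm c b a e d h) : GoodForm a b c d e h := by
  intro x y z
  have := H y x z
  convert this using 1
  ring

/-- Binary forms of determinant 3. -/
theorem binary_det3 (m : ℕ) : ∀ A B C : ℤ, 0 < A → A ≤ m → A * C - B ^ 2 = 3 →
    ∀ y z : ℤ, ∃ Y Z : ℤ, A * y ^ 2 + 2 * B * y * z + C * z ^ 2 = Y ^ 2 + 3 * Z ^ 2 ∨
      A * y ^ 2 + 2 * B * y * z + C * z ^ 2 = 2 * (Y ^ 2 + Y * Z + Z ^ 2) := by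
  induction m with
  | zero => intro A B C h1 h2; exfalso; push_cast at h2; omega
  | succ m ih =>
    intro A B C hA hm hD y z
    obtain ⟨k, hk⟩ := exists_round A B hA
    set B' := B + A * k with hB'
    set C' := C + 2 * B * k + A * k ^ 2 with hC'
    have hD' : A * C' - B' ^ 2 = 3 := by rw [hB', hC']; linear_combination hD
    have hval : A * y ^ 2 + 2 * B * y * z + C * z ^ 2
        = A * (y - k * z) ^ 2 + 2 * B' * (y - k * z) * z + C' * z ^ 2 := by
      rw [hB', hC']; ring
    rw [hval]
    generalize y - k * z = w
    clear_value B' C'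
    have hCpos : 0 < C' := by
      by_contra hcon
      nlinarith [sq_nonneg B']
    by_cases hlt : C' < A
    · obtain ⟨Y, Z, hYZ⟩ := ih C' B' A hCpos (by push_cast at hm; omega) (by linarith) z w
      refine ⟨Y, Z, ?_⟩
      have : A * w ^ 2 + 2 * B' * w * z + C' * z ^ 2
        = C' * z ^ 2 + 2 * B' * z * w + A * w ^ 2 := by ring
      rw [this]; exact hYZ
    · have hA2 : A ≤ 2 := by nlinarith
      have hBl : -1 ≤ B' := by nlinarith
      have hBu : B' ≤ 1 := by nlinarith
      interval_cases A <;> interval_cases B'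
      · omega
      · exact ⟨w, z, Or.inl (by have : C' = 3 := by linarith
                                rw [this]; ring)⟩
      · omega
      · exact ⟨w, -z, Or.inr (by have : C' = 2 := by linarith
                                 rw [this]; ring)⟩
      · omega
      · exact ⟨w, z, Or.inr (by have : C' = 2 := by linarith
                                rw [this]; ring)⟩

theorem good_one (b c d e h : ℤ) (hA : 0 < c - b ^ 2)
    (hdet : c * h + 2 * b * d * e - e ^ 2 - c * d ^ 2 - h * b ^ 2 = 3) :
    GoodForm 1 b c d e h := by
  intro x y z
  obtain ⟨Y, Z, hYZ⟩ := binary_det3 (c - b ^ 2).toNat (c - b ^ 2) (e - b * d) (h - d ^ 2) hA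
    (by omega) (by linear_combination hdet) y z
  refine ⟨x + b * y + d * z, Y, Z, ?_⟩
  rcases hYZ with hh | hh
  · left; linear_combination hh
  · right; linear_combination hh

theorem ternary_step (M : ℕ)
    (IH : ∀ a b c d e h : ℤ, 0 < a → a ≤ M → 0 < a * c - b ^ 2 →
      a * c * h + 2 * b * d * e - a * e ^ 2 - c * d ^ 2 - h * b ^ 2 = 3 → GoodForm a b c d e h)
    (m : ℕ) : ∀ a b c d e h : ℤ, 0 < a → a ≤ M + 1 → 0 < a * c - b ^ 2 → a * c - b ^ 2 ≤ m →
      a * c * h + 2 * b * d * e - a * e ^ 2 - c * d ^ 2 - h * b ^ 2 = 3 →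
      GoodForm a b c d e h := by
  induction m with
  | zero => intro a b c d e h _ _ h1 h2; exfalso; push_cast at h2; omega
  | succ m ih =>
    intro a b c d e h ha haM hA hm hdet
    obtain ⟨k, hk⟩ := exists_round (a * c - b ^ 2) (a * e - b * d) hA
    apply shear_yz k
    have hk' : 4 * (a * (e + c * k) - b * (d + b * k)) ^ 2 ≤ (a * c - b ^ 2) ^ 2 := by
      convert hk using 1; ring
    have hdet' : a * c * (h + 2 * e * k + c * k ^ 2) + 2 * b * (d + b * k) * (e + c * k)
        - a * (e + c * k) ^ 2 - c * (d + b * k) ^ 2 - (h + 2 * e * k + c * k ^ 2) * b ^ 2 = 3 := by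
      linear_combination hdet
    generalize h + 2 * e * k + c * k ^ 2 = h' at *
    generalize e + c * k = e' at *
    generalize d + b * k = d' at *
    have hbin : (a * c - b ^ 2) * (a * h' - d' ^ 2) - (a * e' - b * d') ^ 2 = 3 * a := by
      linear_combination a * hdet'
    have hC : 0 < a * h' - d' ^ 2 := by
      by_contra hcon
      nlinarith [sq_nonneg (a * e' - b * d')]
    by_cases hlt : a * h' - d' ^ 2 < a * c - b ^ 2
    · apply swap_yz
      exact ih a d' h' b e' c ha haM hC (by push_cast at hm; omega) (by linear_combination hdet')
    · have hAa : (a * c - b ^ 2) ^ 2 ≤ 4 * a := by nlinarith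
      obtain ⟨j, hj⟩ := exists_round a b ha
      apply shear_xy j
      have hA' : a * (c + 2 * b * j + a * j ^ 2) - (b + a * j) ^ 2 = a * c - b ^ 2 := by ring
      have hdet'' : a * (c + 2 * b * j + a * j ^ 2) * h' + 2 * (b + a * j) * d' * (e' + d' * j)
        - a * (e' + d' * j) ^ 2 - (c + 2 * b * j + a * j ^ 2) * d' ^ 2 - h' * (b + a * j) ^ 2
          = 3 := by
        linear_combination hdet'
      generalize c + 2 * b * j + a * j ^ 2 = c' at *
      generalize b + a * j = b' at *
      generalize e' + d' * j = e'' at *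
      rw [← hA'] at hA hAa
      generalize hS : a * c' - b' ^ 2 = S at *
      have hc : 0 < c' := by
        by_contra hcon
        nlinarith [sq_nonneg b']
      by_cases hlt' : c' < a
      · apply swap_xy
        exact IH c' b' a e'' d' h' hc (by omega) (by linarith) (by linear_combination hdet'')
      · have h1 : 3 * a ^ 2 ≤ 4 * S := by nlinarith
        have h2 : a < 2 := by
          by_contra hcon
          have h3 : 2 ≤ a := by omega
          have h4 : (3 * a ^ 2) ^ 2 ≤ (4 * S) ^ 2 := by
            apply pow_le_pow_left₀ (by positivity) h1
          have h5 : 9 * a ^ 3 * a ≤ 64 * a := by nlinarith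
          have h6 : 9 * a ^ 3 ≤ 64 := le_of_mul_le_mul_right h5 ha
          have h7 : (2 : ℤ) ^ 3 ≤ a ^ 3 := pow_le_pow_left₀ (by norm_num) h3 3
          omega
        have h3 : a = 1 := by omega
        subst h3
        apply good_one
        · linarith
        · linear_combination hdet''

theorem ternary_all (M : ℕ) : ∀ a b c d e h : ℤ, 0 < a → a ≤ M → 0 < a * c - b ^ 2 →
      a * c * h + 2 * b * d * e - a * e ^ 2 - c * d ^ 2 - h * b ^ 2 = 3 →
      GoodForm a b c d e h := by
  induction M with
  | zero => intro a b c d e h h1 h2; exfalso; push_cast at h2; omega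
  | succ M ih =>
    intro a b c d e h h1 h2 h3 h4
    exact ternary_step M ih (a * c - b ^ 2).toNat a b c d e h h1 (by push_cast at h2; exact h2)
      h3 (by omega) h4

theorem exists_D (N : ℕ) (hN : 1 ≤ N) (h3 : N % 3 = 1) :
    ∃ q D b : ℤ, 0 < q ∧ 0 < D ∧ q = N * D - 3 ∧ q ∣ b ^ 2 + D := by
  have hcop : (4 * (N : ℤ) - 3).natAbs.Coprime (48 * N) := by
    have e : (4 * (N : ℤ) - 3).natAbs = 4 * N - 3 := by omega
    rw [e]
    have c3 : Nat.Coprime (4 * N - 3) 3 := by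
      rw [Nat.coprime_comm, Nat.Prime.coprime_iff_not_dvd Nat.prime_three]; omega
    have c2 : Nat.Coprime (4 * N - 3) 2 := by
      rw [Nat.coprime_comm, Nat.Prime.coprime_iff_not_dvd Nat.prime_two]; omega
    have cN : Nat.Coprime (4 * N - 3) N := by
      have hd1 := Nat.gcd_dvd_left (4 * N - 3) N
      have hd2 := Nat.gcd_dvd_right (4 * N - 3) N
      have hd3 : Nat.gcd (4 * N - 3) N ∣ 3 := by
        have := Nat.dvd_sub (hd2.mul_left 4) hd1
        have e2 : 4 * N - (4 * N - 3) = 3 := by omega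
        rwa [e2] at this
      exact Nat.eq_one_of_dvd_coprimes c3 hd1 hd3
    have e3 : 48 * N = 2 ^ 4 * 3 * N := by ring
    rw [e3]
    exact Nat.Coprime.mul_right (Nat.Coprime.mul_right (c2.pow_right 4) c3) cN
  have e : (4 * (N : ℤ) - 3).natAbs = 4 * N - 3 := by omega
  rw [e] at hcop
  obtain ⟨q, hqgt, hqp, hqmod⟩ :=
    Nat.forall_exists_prime_gt_and_modEq (4 * N) (q := 48 * N) (by omega) hcop
  have hdvd : 48 * N ∣ q - (4 * N - 3) := (Nat.modEq_iff_dvd' (by omega)).mp hqmod.symm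
  obtain ⟨k, hk⟩ := hdvd
  have hq : q + 3 = 4 * N * (12 * k + 1) := by
    have : q + 3 = 48 * N * k + 4 * N := by omega
    rw [this]; ring
  haveI : Fact q.Prime := ⟨hqp⟩
  set E := 12 * k + 1 with hE
  have hq4 : q % 4 = 1 := by
    have : q + 3 = 4 * (N * E) := by rw [hq]; ring
    omega
  have hEodd : Odd E := by rw [Nat.odd_iff]; omega
  have hqodd : Odd q := by rw [Nat.odd_iff]; omega
  have J1 : jacobiSym (E : ℤ) q = 1 := by
    rw [jacobiSym.quadratic_reciprocity_one_mod_four (by omega) hqodd]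
    have : jacobiSym (q : ℤ) E = jacobiSym (-3) E := by
      apply jacobiSym.mod_left'
      apply Int.ModEq.symm
      apply (Int.modEq_iff_dvd).mpr
      refine ⟨4 * N, ?_⟩
      have : (q : ℤ) + 3 = 4 * N * E := by exact_mod_cast hq
      linear_combination this
    rw [this, jacobiSym.neg _ hEodd, ZMod.χ₄_nat_one_mod_four (by omega), one_mul]
    have := jacobiSym.quadratic_reciprocity_one_mod_four' (a := 3) (b := E) (by decide) (by omega)
    push_cast at this
    rw [show ((3 : ℤ)) = ((3 : ℕ) : ℤ) by norm_num] at *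
    rw [this, jacobiSym.mod_left]
    have e2 : ((E : ℤ) % ((3 : ℕ) : ℤ)) = 1 := by omega
    rw [e2, jacobiSym.one_left]
  have hs1 : IsSquare ((E : ℤ) : ZMod q) := ZMod.isSquare_of_jacobiSym_eq_one J1
  have hs2 : IsSquare (-1 : ZMod q) := ZMod.exists_sq_eq_neg_one_iff.mpr (by omega)
  obtain ⟨r, hr⟩ := hs1
  obtain ⟨i, hi⟩ := hs2
  obtain ⟨b, hb⟩ := ZMod.intCast_surjective (2 * i * r)
  refine ⟨q, 4 * E, b, by omega, by omega, ?_, ?_⟩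
  · have : (q : ℤ) + 3 = 4 * N * E := by exact_mod_cast hq
    linear_combination this
  · rw [← ZMod.intCast_zmod_eq_zero_iff_dvd]
    push_cast at hr ⊢
    rw [hb, hr]
    linear_combination (-4 * r ^ 2) * hi

theorem rep113 (N : ℕ) (h3 : N % 3 = 1) (h8 : N % 8 = 5) :
    ∃ x y z : ℤ, (N : ℤ) = x ^ 2 + y ^ 2 + 3 * z ^ 2 := by
  obtain ⟨q, D, b, hq, hD, hqD, a, ha⟩ := exists_D N (by omega) h3
  have hapos : 0 < a := by
    by_contra hcon
    nlinarith [sq_nonneg b]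
  have hg := ternary_all a.toNat a b q 1 0 N hapos (by omega) (by linarith)
    (by linear_combination (-(N : ℤ)) * ha - hqD) 0 0 1
  obtain ⟨X, Y, Z, h | h⟩ := hg
  · exact ⟨X, Y, Z, by linear_combination h⟩
  · exfalso
    have h' : (N : ℤ) = X ^ 2 + 2 * (Y ^ 2 + Y * Z + Z ^ 2) := by linear_combination h
    have key : ∀ x y z : ZMod 8, (5 : ZMod 8) ≠ x ^ 2 + 2 * (y ^ 2 + y * z + z ^ 2) := by decide
    apply key X Y Z
    have := congrArg (Int.cast : ℤ → ZMod 8) h'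
    push_cast at this
    rw [← this]
    have e : N = 8 * (N / 8) + 5 := by omega
    rw [e]; push_cast
    have : (8 : ZMod 8) = 0 := by decide
    rw [this]; ring

/-- For odd `u`, `v`, the standard automorph of `u² + 3v²` over odd pairs. -/
theorem automorph (u v : ℤ) (hu : u % 2 = 1) (hv : v % 2 = 1) :
    ∃ u' v' : ℤ, u ^ 2 + 3 * v ^ 2 = u' ^ 2 + 3 * v' ^ 2 ∧ u' % 2 = 1 ∧ v' % 2 = 1 ∧
      ((2 * u' = u + 3 * v ∧ 2 * v' = u - v) ∨ (2 * u' = u - 3 * v ∧ 2 * v' = u + v)) := by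
  by_cases h : (u - v) % 4 = 2
  · obtain ⟨t, ht⟩ : ∃ t, u - v = 2 * t := ⟨(u - v) / 2, by omega⟩
    refine ⟨t + 2 * v, t, ?_, by omega, by omega, Or.inl ⟨by omega, by omega⟩⟩
    have : u = v + 2 * t := by omega
    rw [this]; ring
  · obtain ⟨t, ht⟩ : ∃ t, u + v = 2 * t := ⟨(u + v) / 2, by omega⟩
    refine ⟨t - 2 * v, t, ?_, by omega, by omega, Or.inr ⟨by omega, by omega⟩⟩
    have : u = 2 * t - v := by omega
    rw [this]; ring

/-- One can take all variables odd. -/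
theorem rep_even_aux (N a b c : ℤ) (h8 : N % 8 = 5) (h : N = a ^ 2 + b ^ 2 + 3 * c ^ 2)
    (ha : a % 2 = 1) : ∃ x y z : ℤ, N = x ^ 2 + y ^ 2 + 3 * z ^ 2 ∧ x % 2 = 1 ∧ y % 2 = 1 ∧
      z % 2 = 1 := by
  have hN : (N : ZMod 8) = 5 := by
    have e : N = 8 * (N / 8) + 5 := by omega
    rw [e]; push_cast
    have : (8 : ZMod 8) = 0 := by decide
    rw [this]; ring
  obtain ⟨s, hs⟩ : ∃ s, a = 2 * s + 1 := ⟨a / 2, by omega⟩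
  rcases Int.emod_two_eq_zero_or_one b with hb | hb <;>
  rcases Int.emod_two_eq_zero_or_one c with hc | hc
  · obtain ⟨t, rfl⟩ : ∃ t, b = 2 * t := ⟨b / 2, by omega⟩
    obtain ⟨r, rfl⟩ : ∃ r, c = 2 * r := ⟨c / 2, by omega⟩
    have hpar : (t + r) % 2 = 1 := by
      by_contra hcon
      obtain ⟨w, hw⟩ : ∃ w, t = r + 2 * w := ⟨(t - r) / 2, by omega⟩
      have h' := congrArg (Int.cast : ℤ → ZMod 8) h
      rw [hN, hs, hw] at h'
      push_cast at h'
      have key : ∀ s r w : ZMod 8,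
        (5 : ZMod 8) ≠ (2 * s + 1) ^ 2 + (2 * (r + 2 * w)) ^ 2 + 3 * (2 * r) ^ 2 := by decide
      exact key _ _ _ h'
    exact ⟨a, t + 3 * r, t - r, by rw [h]; ring, ha, by omega, by omega⟩
  · exfalso
    obtain ⟨t, rfl⟩ : ∃ t, b = 2 * t := ⟨b / 2, by omega⟩
    obtain ⟨r, rfl⟩ : ∃ r, c = 2 * r + 1 := ⟨c / 2, by omega⟩
    have h' := congrArg (Int.cast : ℤ → ZMod 8) h
    rw [hN, hs] at h'
    push_cast at h'
    have key : ∀ s t r : ZMod 8,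
        (5 : ZMod 8) ≠ (2 * s + 1) ^ 2 + (2 * t) ^ 2 + 3 * (2 * r + 1) ^ 2 := by decide
    exact key _ _ _ h'
  · exfalso
    obtain ⟨t, rfl⟩ : ∃ t, b = 2 * t + 1 := ⟨b / 2, by omega⟩
    obtain ⟨r, rfl⟩ : ∃ r, c = 2 * r := ⟨c / 2, by omega⟩
    have h' := congrArg (Int.cast : ℤ → ZMod 8) h
    rw [hN, hs] at h'
    push_cast at h'
    have key : ∀ s t r : ZMod 8,
        (5 : ZMod 8) ≠ (2 * s + 1) ^ 2 + (2 * t + 1) ^ 2 + 3 * (2 * r) ^ 2 := by decide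
    exact key _ _ _ h'
  · exact ⟨a, b, c, h, ha, hb, hc⟩

theorem rep_odd (N : ℕ) (h3 : N % 3 = 1) (h8 : N % 8 = 5) :
    ∃ x y z : ℤ, (N : ℤ) = x ^ 2 + y ^ 2 + 3 * z ^ 2 ∧ x % 2 = 1 ∧ y % 2 = 1 ∧ z % 2 = 1 := by
  obtain ⟨a, b, c, h⟩ := rep113 N h3 h8
  rcases Int.emod_two_eq_zero_or_one a with ha | ha
  · rcases Int.emod_two_eq_zero_or_one b with hb | hb
    · exfalso
      obtain ⟨s, rfl⟩ : ∃ s, a = 2 * s := ⟨a / 2, by omega⟩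
      obtain ⟨t, rfl⟩ : ∃ t, b = 2 * t := ⟨b / 2, by omega⟩
      have hN : ((N : ℤ) : ZMod 8) = 5 := by
        have e : N = 8 * (N / 8) + 5 := by omega
        rw [e]; push_cast
        have : (8 : ZMod 8) = 0 := by decide
        rw [this]; ring
      have h' := congrArg (Int.cast : ℤ → ZMod 8) h
      rw [hN] at h'
      push_cast at h'
      have key : ∀ s t r : ZMod 8,
        (5 : ZMod 8) ≠ (2 * s) ^ 2 + (2 * t) ^ 2 + 3 * r ^ 2 := by decide
      exact key _ _ _ h'
    · exact rep_even_aux N b a c (by omega) (by rw [h]; ring) hb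
  · exact rep_even_aux N a b c (by omega) h ha

/-- fix the coprimality to 3 -/
theorem rep_139 (N : ℕ) (h3 : N % 3 = 1) (h8 : N % 8 = 5) :
    ∃ u v w : ℤ, (N : ℤ) = u ^ 2 + 3 * v ^ 2 + 9 * w ^ 2 ∧ u % 2 = 1 ∧ v % 2 = 1 ∧ w % 2 = 1 ∧
      u % 3 ≠ 0 ∧ v % 3 ≠ 0 ∧ w % 3 ≠ 0 := by
  obtain ⟨u, v, w, h, hu, hv, hw, hu3⟩ : ∃ u v w : ℤ, (N : ℤ) = u ^ 2 + 3 * v ^ 2 + 9 * w ^ 2 ∧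
      u % 2 = 1 ∧ v % 2 = 1 ∧ w % 2 = 1 ∧ u % 3 ≠ 0 := by
    obtain ⟨x, y, z, h, hx, hy, hz⟩ := rep_odd N h3 h8
    have sq3 : ∀ t : ℤ, (t % 3 = 0 ∧ t ^ 2 % 3 = 0) ∨ (t % 3 ≠ 0 ∧ t ^ 2 % 3 = 1) := by
      intro t
      have : t % 3 = 0 ∨ t % 3 = 1 ∨ t % 3 = 2 := by omega
      rcases this with h | h | h <;> simp [pow_two, Int.mul_emod, h]
    rcases sq3 x with ⟨hx3, hx'⟩ | ⟨hx3, hx'⟩ <;> rcases sq3 y with ⟨hy3, hy'⟩ | ⟨hy3, hy'⟩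
    · omega
    · obtain ⟨t, rfl⟩ : ∃ t, x = 3 * t := ⟨x / 3, by omega⟩
      exact ⟨y, z, t, by rw [h]; ring, hy, hz, by omega, hy3⟩
    · obtain ⟨t, rfl⟩ : ∃ t, y = 3 * t := ⟨y / 3, by omega⟩
      exact ⟨x, z, t, by rw [h]; ring, hx, hz, by omega, hx3⟩
    · omega
  obtain ⟨u, v, h, hu, hv, hu3, hv3⟩ : ∃ u v : ℤ, (N : ℤ) = u ^ 2 + 3 * v ^ 2 + 9 * w ^ 2 ∧
      u % 2 = 1 ∧ v % 2 = 1 ∧ u % 3 ≠ 0 ∧ v % 3 ≠ 0 := by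
    by_cases hv3 : v % 3 = 0
    · obtain ⟨u', v', he, hu', hv', hor⟩ := automorph u v hu hv
      exact ⟨u', v', by rw [h, he], hu', hv', by omega, by omega⟩
    · exact ⟨u, v, h, hu, hv, hu3, hv3⟩
  by_cases hw3 : w % 3 = 0
  · obtain ⟨v', w', he, hv', hw', hor⟩ := automorph v w hv hw
    exact ⟨u, v', w', by linear_combination h + 3 * he, hu, hv', hw', hu3, by omega, by omega⟩
  · exact ⟨u, v, w, h, hu, hv, hw, hu3, hv3, hw3⟩

theorem to_p5 (u : ℤ) (h2 : u % 2 = 1) (h3 : u % 3 ≠ 0) : ∃ x : ℤ, u ^ 2 = 24 * p5 x + 1 := by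
  have key : ∀ x : ℤ, (6 * x - 1) ^ 2 = 24 * p5 x + 1 := by
    intro x
    have : (3 * x ^ 2 - x) % 2 = 0 := by
      rcases Int.emod_two_eq_zero_or_one x with h | h <;>
        simp [pow_two, Int.sub_emod, Int.mul_emod, h]
    have h' : 2 * p5 x = 3 * x ^ 2 - x := by unfold p5; omega
    linear_combination -12 * h'
  have : u % 6 = 5 ∨ u % 6 = 1 := by omega
  rcases this with h | h
  · obtain ⟨x, rfl⟩ : ∃ x, u = 6 * x - 1 := ⟨(u + 1) / 6, by omega⟩
    exact ⟨x, key x⟩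
  · obtain ⟨x, rfl⟩ : ∃ x, u = -(6 * x - 1) := ⟨(1 - u) / 6, by omega⟩
    exact ⟨x, by rw [← key x]; ring⟩

theorem p5_add_3p5_add_9p5_universal (n : ℕ) :
    ∃ x y z : ℤ, (n : ℤ) = p5 x + 3 * p5 y + 9 * p5 z := by
  obtain ⟨u, v, w, h, hu, hv, hw, hu3, hv3, hw3⟩ :=
    rep_139 (24 * n + 13) (by omega) (by omega)
  obtain ⟨x, hx⟩ := to_p5 u hu hu3
  obtain ⟨y, hy⟩ := to_p5 v hv hv3
  obtain ⟨z, hz⟩ := to_p5 w hw hw3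
  refine ⟨x, y, z, ?_⟩
  push_cast at h
  omega
end

section
/- For every nonnegative integer n, there exist integers x, y, z such that n = 3·p_3(x) + p_5(y) + p_7(z), where p_3(x) = (x² + x)/2, p_5(y) = (3y² − y)/2, and p_7(z) = (5z² − 3z)/2. In other words, the sum 3p_3 + p_5 + p_7 is universal over ℤ. -/
/-- Generalized triangular number: `p₃(x) = (x² + x)/2`. -/
def p3 (x : ℤ) : ℤ := (x ^ 2 + x) / 2

/-- Generalized heptagonal number: `p₇(x) = (5x² − 3x)/2`. -/
def p7 (x : ℤ) : ℤ := (5 * x ^ 2 - 3 * x) / 2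


def tval (a b c r s t x y z : ℤ) : ℤ :=
  a * x ^ 2 + b * y ^ 2 + c * z ^ 2 + 2 * r * y * z + 2 * s * x * z + 2 * t * x * y

structure TGood (N a b c r s t : ℤ) : Prop where
  pos1 : 0 < a
  pos2 : 0 < a * b - t ^ 2
  det : a * b * c + 2 * r * s * t - a * r ^ 2 - b * s ^ 2 - c * t ^ 2 = 300
  mod4 : ∀ x y z, tval a b c r s t x y z % 4 = 0 ∨ tval a b c r s t x y z % 4 = 1
  mod5 : ∀ x y z, tval a b c r s t x y z % 5 ≠ 1 ∧ tval a b c r s t x y z % 5 ≠ 4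
  rep : ∃ x y z, tval a b c r s t x y z = N

theorem TGood.swap12 {N a b c r s t : ℤ} (h : TGood N a b c r s t) :
    TGood N b a c s r t where
  pos1 := by
    have h1 := h.pos1
    have h2 := h.pos2
    by_contra hb
    nlinarith [sq_nonneg t]
  pos2 := by linarith [h.pos2, mul_comm a b]
  det := by linarith [h.det, mul_comm a b]
  mod4 := fun x y z => by
    have := h.mod4 y x z
    have e : tval b a c s r t x y z = tval a b c r s t y x z := by unfold tval; ring
    rwa [e]
  mod5 := fun x y z => by
    have := h.mod5 y x z
    have e : tval b a c s r t x y z = tval a b c r s t y x z := by unfold tval; ring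
    rwa [e]
  rep := by
    obtain ⟨x, y, z, e⟩ := h.rep
    exact ⟨y, x, z, by rw [← e]; unfold tval; ring⟩

theorem TGood.swap23 {N a b c r s t : ℤ} (h : TGood N a b c r s t) :
    TGood N a c b r t s where
  pos1 := h.pos1
  pos2 := by
    have h1 := h.pos1
    have h2 := h.pos2
    have e : (a * b - t ^ 2) * (a * c - s ^ 2) = 300 * a + (a * r - s * t) ^ 2 := by
      rw [← h.det]; ring
    by_contra hb
    nlinarith [sq_nonneg (a * r - s * t)]
  det := by linarith [h.det]
  mod4 := fun x y z => by
    have := h.mod4 x z y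
    have e : tval a c b r t s x y z = tval a b c r s t x z y := by unfold tval; ring
    rwa [e]
  mod5 := fun x y z => by
    have := h.mod5 x z y
    have e : tval a c b r t s x y z = tval a b c r s t x z y := by unfold tval; ring
    rwa [e]
  rep := by
    obtain ⟨x, y, z, e⟩ := h.rep
    exact ⟨x, z, y, by rw [← e]; unfold tval; ring⟩

/-- replace `e₂` by `e₂ + k e₁` -/
theorem TGood.shift21 {N a b c r s t : ℤ} (h : TGood N a b c r s t) (k : ℤ) :
    TGood N a (b + 2 * k * t + k ^ 2 * a) c (r + k * s) s (t + k * a) where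
  pos1 := h.pos1
  pos2 := by linarith [h.pos2]
  det := by linarith [h.det]
  mod4 := fun x y z => by
    have := h.mod4 (x + k * y) y z
    have e : tval a (b + 2 * k * t + k ^ 2 * a) c (r + k * s) s (t + k * a) x y z
      = tval a b c r s t (x + k * y) y z := by unfold tval; ring
    rwa [e]
  mod5 := fun x y z => by
    have := h.mod5 (x + k * y) y z
    have e : tval a (b + 2 * k * t + k ^ 2 * a) c (r + k * s) s (t + k * a) x y z
      = tval a b c r s t (x + k * y) y z := by unfold tval; ring
    rwa [e]
  rep := by
    obtain ⟨x, y, z, e⟩ := h.rep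
    exact ⟨x - k * y, y, z, by rw [← e]; unfold tval; ring⟩

/-- replace `e₃` by `e₃ + k e₁` -/
theorem TGood.shift31 {N a b c r s t : ℤ} (h : TGood N a b c r s t) (k : ℤ) :
    TGood N a b (c + 2 * k * s + k ^ 2 * a) (r + k * t) (s + k * a) t :=
  (h.swap23.shift21 k).swap23

/-- replace `e₃` by `e₃ + k e₂` -/
theorem TGood.shift32 {N a b c r s t : ℤ} (h : TGood N a b c r s t) (k : ℤ) :
    TGood N a b (c + 2 * k * r + k ^ 2 * b) (r + k * b) (s + k * t) t :=
  (h.swap12.shift31 k).swap12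

theorem exists_shift (m a : ℤ) (ha : 0 < a) : ∃ k, -a ≤ 2 * (m + k * a) ∧ 2 * (m + k * a) ≤ a := by
  refine ⟨-((2 * m + a) / (2 * a)), ?_, ?_⟩
  · have := Int.mul_ediv_self_le (x := 2 * m + a) (k := 2 * a) (by omega)
    nlinarith
  · have := Int.lt_mul_ediv_self_add (x := 2 * m + a) (k := 2 * a) (by omega)
    nlinarith

theorem mod5_aux (t b : ℤ) (h1 : -2 ≤ t) (h2 : t ≤ 2) (vb : b % 5 ≠ 1 ∧ b % 5 ≠ 4)
    (vp : (5 + b + 2 * t) % 5 ≠ 1 ∧ (5 + b + 2 * t) % 5 ≠ 4)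
    (vm : (5 + b - 2 * t) % 5 ≠ 1 ∧ (5 + b - 2 * t) % 5 ≠ 4)
    (v2 : (4 * 5 + b + 4 * t) % 5 ≠ 1 ∧ (4 * 5 + b + 4 * t) % 5 ≠ 4)
    (v3 : (4 * 5 + b - 4 * t) % 5 ≠ 1 ∧ (4 * 5 + b - 4 * t) % 5 ≠ 4) : t = 0 := by
  have hb : b % 5 = 0 ∨ b % 5 = 2 ∨ b % 5 = 3 := by omega
  clear vb
  interval_cases t <;> rcases hb with hb | hb | hb <;> omega

theorem TGood.final {N a b c r s t B : ℤ} (h : TGood N a b c r s t) (ha8 : a ≤ 8)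
    (hB : a * b - t ^ 2 = B) (hB2 : B ^ 2 ≤ 400 * a) (hab : a ≤ b)
    (ht1 : -a ≤ 2 * t) (ht2 : 2 * t ≤ a)
    (hr1 : -B ≤ 2 * (a * r - s * t)) (hr2 : 2 * (a * r - s * t) ≤ B)
    (hs1 : -a ≤ 2 * s) (hs2 : 2 * s ≤ a) :
    ∃ x y z : ℤ, N = 5 * x ^ 2 + 8 * y ^ 2 + 4 * y * z + 8 * z ^ 2 := by
  have ha := h.pos1
  have hB56 : B ≤ 56 := by nlinarith
  have va : (a) % 5 ≠ 1 ∧ (a) % 5 ≠ 4 := by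
    have := h.mod5 1 0 0
    rwa [show tval a b c r s t 1 0 0 = a by unfold tval; ring] at this
  have va4 : (a) % 4 = 0 ∨ (a) % 4 = 1 := by
    have := h.mod4 1 0 0
    rwa [show tval a b c r s t 1 0 0 = a by unfold tval; ring] at this
  have vb : (b) % 5 ≠ 1 ∧ (b) % 5 ≠ 4 := by
    have := h.mod5 0 1 0
    rwa [show tval a b c r s t 0 1 0 = b by unfold tval; ring] at this
  have vb4 : (b) % 4 = 0 ∨ (b) % 4 = 1 := by
    have := h.mod4 0 1 0
    rwa [show tval a b c r s t 0 1 0 = b by unfold tval; ring] at this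
  have vp : (a + b + 2 * t) % 5 ≠ 1 ∧ (a + b + 2 * t) % 5 ≠ 4 := by
    have := h.mod5 1 1 0
    rwa [show tval a b c r s t 1 1 0 = a + b + 2 * t by unfold tval; ring] at this
  have vp4 : (a + b + 2 * t) % 4 = 0 ∨ (a + b + 2 * t) % 4 = 1 := by
    have := h.mod4 1 1 0
    rwa [show tval a b c r s t 1 1 0 = a + b + 2 * t by unfold tval; ring] at this
  have vm : (a + b - 2 * t) % 5 ≠ 1 ∧ (a + b - 2 * t) % 5 ≠ 4 := by
    have := h.mod5 1 (-1) 0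
    rwa [show tval a b c r s t 1 (-1) 0 = a + b - 2 * t by unfold tval; ring] at this
  have v2 : (4 * a + b + 4 * t) % 5 ≠ 1 ∧ (4 * a + b + 4 * t) % 5 ≠ 4 := by
    have := h.mod5 2 1 0
    rwa [show tval a b c r s t 2 1 0 = 4 * a + b + 4 * t by unfold tval; ring] at this
  have v3 : (4 * a + b - 4 * t) % 5 ≠ 1 ∧ (4 * a + b - 4 * t) % 5 ≠ 4 := by
    have := h.mod5 2 (-1) 0
    rwa [show tval a b c r s t 2 (-1) 0 = 4 * a + b - 4 * t by unfold tval; ring] at this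
  have wc : (c) % 5 ≠ 1 ∧ (c) % 5 ≠ 4 := by
    have := h.mod5 0 0 1
    rwa [show tval a b c r s t 0 0 1 = c by unfold tval; ring] at this
  have wp : (a + c + 2 * s) % 5 ≠ 1 ∧ (a + c + 2 * s) % 5 ≠ 4 := by
    have := h.mod5 1 0 1
    rwa [show tval a b c r s t 1 0 1 = a + c + 2 * s by unfold tval; ring] at this
  have wm : (a + c - 2 * s) % 5 ≠ 1 ∧ (a + c - 2 * s) % 5 ≠ 4 := by
    have := h.mod5 1 0 (-1)
    rwa [show tval a b c r s t 1 0 (-1) = a + c - 2 * s by unfold tval; ring] at this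
  have w2 : (4 * a + c + 4 * s) % 5 ≠ 1 ∧ (4 * a + c + 4 * s) % 5 ≠ 4 := by
    have := h.mod5 2 0 1
    rwa [show tval a b c r s t 2 0 1 = 4 * a + c + 4 * s by unfold tval; ring] at this
  have w3 : (4 * a + c - 4 * s) % 5 ≠ 1 ∧ (4 * a + c - 4 * s) % 5 ≠ 4 := by
    have := h.mod5 2 0 (-1)
    rwa [show tval a b c r s t 2 0 (-1) = 4 * a + c - 4 * s by unfold tval; ring] at this
  have hdet := h.det
  obtain ⟨x, y, z, hx⟩ := h.rep
  clear h
  have hacases : a = 5 ∨ a = 8 := by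
    clear hB hB2 hr1 hr2 hdet hx vb vb4 vp vp4 vm v2 v3 wc wp wm w2 w3
    omega
  rcases hacases with rfl | rfl
  · have ht0 : t = 0 := mod5_aux t b (by omega) (by omega) vb vp vm v2 v3
    have hs0 : s = 0 := mod5_aux s c (by omega) (by omega) wc wp wm w2 w3
    subst ht0 hs0
    have hB44 : B ≤ 44 := by nlinarith
    have hb8 : b = 8 := by
      clear hB2 hdet hx hr1 hr2 wc wp wm w2 w3 vm v2 v3 hs1 hs2 ht1 ht2 vp
      omega
    subst hb8
    have hr3 : -4 ≤ r := by omega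
    have hr4 : r ≤ 4 := by omega
    have hc : 8 * c = 60 + r ^ 2 := by linarith
    unfold tval at hx
    clear hB2 hdet
    have hrc : (r = 2 ∨ r = -2) ∧ c = 8 := by
      clear hx
      interval_cases r <;> omega
    obtain ⟨hr, rfl⟩ := hrc
    rcases hr with rfl | rfl
    · exact ⟨x, y, z, by rw [← hx]; ring⟩
    · exact ⟨x, y, -z, by rw [← hx]; ring⟩
  · exfalso
    clear hB2 hdet hx hr1 hr2 wc wp wm w2 w3 hs1 hs2
    have hr3 : -4 ≤ t := by omega
    have hr4 : t ≤ 4 := by omega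
    rcases va with ⟨-, -⟩
    have hb : b = 8 := by
      have h1 : b ≤ 9 := by nlinarith
      clear hB vp vp4 vm v2 v3
      omega
    subst hb
    interval_cases t <;> omega

theorem TGood.reduced {N a b c r s t : ℤ} (h : TGood N a b c r s t) :
    ∃ x y z : ℤ, N = 5 * x ^ 2 + 8 * y ^ 2 + 4 * y * z + 8 * z ^ 2 := by
  classical
  -- minimal a
  obtain ⟨a, ⟨b0, c0, r0, s0, t0, h0⟩, hmin⟩ : ∃ a, (∃ b c r s t, TGood N a b c r s t) ∧
      ∀ a' b c r s t, TGood N a' b c r s t → a ≤ a' := by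
    have hex : ∃ n : ℕ, ∃ b c r s t, TGood N (n : ℤ) b c r s t := by
      refine ⟨a.toNat, b, c, r, s, t, ?_⟩
      rwa [Int.toNat_of_nonneg h.pos1.le]
    refine ⟨(Nat.find hex : ℤ), Nat.find_spec hex, ?_⟩
    intro a' b c r s t h'
    have := Nat.find_min' hex (m := a'.toNat)
      ⟨b, c, r, s, t, by rwa [Int.toNat_of_nonneg h'.pos1.le]⟩
    have h2 := h'.pos1
    omega
  clear h b c r s t
  obtain ⟨B, ⟨b, c, r, s, t, h, hB⟩, hBmin⟩ : ∃ B : ℤ, (∃ b c r s t, TGood N a b c r s t ∧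
      a * b - t ^ 2 = B) ∧ ∀ b c r s t, TGood N a b c r s t → B ≤ a * b - t ^ 2 := by
    have hex : ∃ n : ℕ, ∃ b c r s t, TGood N a b c r s t ∧ a * b - t ^ 2 = n := by
      refine ⟨(a * b0 - t0 ^ 2).toNat, b0, c0, r0, s0, t0, h0, ?_⟩
      rw [Int.toNat_of_nonneg h0.pos2.le]
    refine ⟨(Nat.find hex : ℤ), Nat.find_spec hex, ?_⟩
    intro b c r s t h'
    have h2 := h'.pos2
    have := Nat.find_min' hex (m := (a * b - t ^ 2).toNat)
      ⟨b, c, r, s, t, h', by rw [Int.toNat_of_nonneg h2.le]⟩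
    omega
  clear h0 b0 c0 r0 s0 t0
  have ha := h.pos1
  -- shift t
  obtain ⟨b, c, r, s, t, h, hB, ht1, ht2⟩ : ∃ b c r s t, TGood N a b c r s t ∧
      a * b - t ^ 2 = B ∧ -a ≤ 2 * t ∧ 2 * t ≤ a := by
    obtain ⟨k, hk1, hk2⟩ := exists_shift t a ha
    exact ⟨_, _, _, _, _, h.shift21 k, by rw [← hB]; ring, hk1, hk2⟩
  have hBpos : 0 < B := by rw [← hB]; exact h.pos2
  -- shift third by second
  obtain ⟨c, r, s, h, hr1, hr2⟩ : ∃ c r s, TGood N a b c r s t ∧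
      -B ≤ 2 * (a * r - s * t) ∧ 2 * (a * r - s * t) ≤ B := by
    obtain ⟨k, hk1, hk2⟩ := exists_shift (a * r - s * t) B hBpos
    have e : a * (r + k * b) - (s + k * t) * t = a * r - s * t + k * B := by rw [← hB]; ring
    exact ⟨_, _, _, h.shift32 k, by rw [e]; exact hk1, by rw [e]; exact hk2⟩
  -- shift third by first
  obtain ⟨c, r, s, h, hr1, hr2, hs1, hs2⟩ : ∃ c r s, TGood N a b c r s t ∧
      -B ≤ 2 * (a * r - s * t) ∧ 2 * (a * r - s * t) ≤ B ∧ -a ≤ 2 * s ∧ 2 * s ≤ a := by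
    obtain ⟨k, hk1, hk2⟩ := exists_shift s a ha
    have e : a * (r + k * t) - (s + k * a) * t = a * r - s * t := by ring
    exact ⟨_, _, _, h.shift31 k, by rw [e]; exact hr1, by rw [e]; exact hr2, hk1, hk2⟩
  have hC : B ≤ a * c - s ^ 2 := hBmin _ _ _ _ _ h.swap23
  have hab : a ≤ b := hmin _ _ _ _ _ _ h.swap12
  have e : B * (a * c - s ^ 2) = 300 * a + (a * r - s * t) ^ 2 := by
    rw [← hB, ← h.det]; ring
  have hB2 : B ^ 2 ≤ 400 * a := by
    have h1 : B * B ≤ B * (a * c - s ^ 2) := by gcongr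
    have h2 : 4 * (a * r - s * t) ^ 2 ≤ B ^ 2 := by nlinarith
    nlinarith
  have ht3 : 4 * t ^ 2 ≤ a ^ 2 := by nlinarith
  have ha2 : 3 * a ^ 2 ≤ 4 * B := by nlinarith
  have ha8 : a ≤ 8 := by
    by_contra hcon
    have h9 : 9 ≤ a := by omega
    have h1 : (3 * a ^ 2) * (3 * a ^ 2) ≤ (4 * B) * (4 * B) := by gcongr
    have h2 : 9 * a ^ 4 ≤ 6400 * a := by nlinarith
    have h3 : 9 * a ^ 3 ≤ 6400 := by nlinarith
    nlinarith [pow_le_pow_left₀ (by norm_num) h9 3]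
  exact h.final ha8 hB hB2 hab ht1 ht2 hr1 hr2 hs1 hs2

open NumberTheorySymbols in
/-- The Dirichlet-type construction of a suitable ternary form representing `N`. -/
theorem exists_TGood (n : ℕ) : ∃ a b c r s t : ℤ, TGood (120 * (n : ℤ) + 77) a b c r s t := by
  have hcop : IsCoprime (2 * (120 * (n : ℤ) + 77) - 15) ((30 * (120 * n + 77) : ℕ) : ℤ) := by
    push_cast
    apply IsCoprime.mul_right
    · exact ⟨19, -(152 * n + 88), by ring⟩
    · exact ⟨64 * n + 41, 8 - 2 * (64 * n + 41), by ring⟩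
  obtain ⟨p, hpgt, hp, hmod⟩ := Nat.forall_exists_prime_gt_and_zmodEq (2 * (120 * n + 77))
    (by positivity) hcop
  obtain ⟨k, hk⟩ := hmod.symm.dvd
  push_cast at hk
  -- d = 30 k + 2
  obtain ⟨N, hN⟩ : ∃ N : ℕ, N = 120 * n + 77 := ⟨_, rfl⟩
  have hNz : (120 * (n : ℤ) + 77) = N := by rw [hN]; push_cast; ring
  rw [hNz] at hk ⊢
  have hpN : (p : ℤ) = N * (30 * k + 2) - 15 := by linarith
  have hkpos : 0 ≤ k := by
    by_contra hneg
    have : (N : ℤ) * (30 * k + 2) ≤ 0 :=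
      mul_nonpos_of_nonneg_of_nonpos (by positivity) (by omega)
    omega
  have hpodd : p % 2 = 1 := by
    rcases hp.eq_two_or_odd with h | h
    · omega
    · exact h
  have hp3 : p % 3 = 1 := by
    have : (p : ℤ) = 3 * (N * 10 * k + 80 * n + 46) + 1 := by
      rw [hpN, ← hNz]; ring
    omega
  have : Fact p.Prime := ⟨hp⟩
  have hj3 : J(-3 | p) = 1 := by
    rw [jacobiSym.mod_right _ (Nat.odd_iff.mpr hpodd)]
    have : p % (4 * (-3 : ℤ).natAbs) = 1 ∨ p % (4 * (-3 : ℤ).natAbs) = 7 := by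
      change p % 12 = 1 ∨ p % 12 = 7
      omega
    rcases this with h | h <;> rw [h] <;> norm_num
  have hjN : J((N : ℤ) | p) = 1 := by
    rw [jacobiSym.quadratic_reciprocity_one_mod_four (by omega) (Nat.odd_iff.mpr hpodd)]
    rw [jacobiSym.mod_left' (a₂ := -15)
      (by rw [hpN]; exact (Int.emod_emod_of_dvd _ (dvd_refl _)).symm.trans (by
            rw [sub_eq_add_neg, Int.mul_add_emod_self_left]; simp))]
    rw [jacobiSym.mod_right _ (Nat.odd_iff.mpr (by omega))]
    have : N % (4 * (-15 : ℤ).natAbs) = 17 := by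
      change N % 60 = 17
      omega
    rw [this]; norm_num
  have hj : J(-3 * (N : ℤ) | p) = 1 := by rw [jacobiSym.mul_left, hj3, hjN]; norm_num
  obtain ⟨y, hy⟩ := ZMod.isSquare_of_jacobiSym_eq_one hj
  have hNp : (N : ZMod p) ≠ 0 := by
    intro h0
    rw [ZMod.natCast_eq_zero_iff] at h0
    have := Nat.le_of_dvd (by omega) h0
    omega
  -- h₀
  have hdp : (N : ZMod p) * (30 * (k : ZMod p) + 2) = 15 := by
    have := congrArg (Int.cast : ℤ → ZMod p) hpN
    push_cast at this
    rw [ZMod.natCast_self] at this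
    linear_combination -this
  have hdvd0 : ∃ h : ℤ, (p : ℤ) ∣ 5 * h ^ 2 + (30 * k + 2) := by
    obtain ⟨h, hh⟩ := ZMod.intCast_surjective (y * (N : ZMod p)⁻¹)
    refine ⟨h, ?_⟩
    rw [← ZMod.intCast_zmod_eq_zero_iff_dvd]
    push_cast
    rw [hh]
    push_cast at hy
    have h2 : (N : ZMod p) * (5 * (y * (N : ZMod p)⁻¹) ^ 2 + (30 * k + 2)) = 0 := by
      have hinv : (N : ZMod p) * (N : ZMod p)⁻¹ = 1 := mul_inv_cancel₀ hNp
      have e2 : y ^ 2 = -3 * N := by rw [hy]; ring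
      calc (N : ZMod p) * (5 * (y * (N : ZMod p)⁻¹) ^ 2 + (30 * k + 2))
          = 5 * y ^ 2 * (N : ZMod p)⁻¹ * (N * (N : ZMod p)⁻¹) + N * (30 * k + 2) := by ring
        _ = -15 * (N * (N : ZMod p)⁻¹) * (N * (N : ZMod p)⁻¹) + N * (30 * k + 2) := by
          rw [e2]; ring
        _ = 0 := by rw [hinv, hdp]; ring
    rcases mul_eq_zero.mp h2 with h | h
    · exact absurd h hNp
    · exact h
  obtain ⟨h, hodd, a, ha⟩ : ∃ h : ℤ, h % 2 = 1 ∧ (p : ℤ) ∣ 5 * h ^ 2 + (30 * k + 2) := by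
    obtain ⟨h, hh⟩ := hdvd0
    rcases Int.emod_two_eq_zero_or_one h with h0 | h0
    · refine ⟨h + p, by omega, ?_⟩
      have e : 5 * (h + (p : ℤ)) ^ 2 + (30 * k + 2)
        = 5 * h ^ 2 + (30 * k + 2) + p * (10 * h + 5 * p) := by ring
      rw [e]
      exact dvd_add hh (dvd_mul_right _ _)
    · exact ⟨h, h0, hh⟩
  have hppos : (0 : ℤ) < p := by exact_mod_cast hp.pos
  have hapos : 0 < a := by
    by_contra hneg
    nlinarith [sq_nonneg h]
  have ha4 : a % 4 = 1 := by
    obtain ⟨m, hm⟩ : ∃ m, h = 2 * m + 1 := ⟨h / 2, by omega⟩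
    have e1 : (p : ℤ) = 4 * (30 * n * (30 * k + 2) + 19 * (30 * k + 2) + 7 * k - 4) + 2 * k + 3 := by
      rw [hpN, ← hNz]; ring
    have e2 : 5 * h ^ 2 + (30 * k + 2) = 4 * (5 * m ^ 2 + 5 * m + 7 * k + 1) + 2 * k + 3 := by
      rw [hm]; ring
    generalize 30 * (n : ℤ) * (30 * k + 2) + 19 * (30 * k + 2) + 7 * k - 4 = u at e1
    generalize 5 * m ^ 2 + 5 * m + 7 * k + 1 = v at e2
    rw [e2, e1] at ha
    have h3 : ((2 * k + 3) * (a - 1)) % 4 = 0 := by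
      have : (2 * k + 3) * (a - 1) = 4 * (v - u * a) := by linarith
      omega
    have h4 : (2 * k + 3) % 4 = 1 ∨ (2 * k + 3) % 4 = 3 := by omega
    rw [Int.mul_emod] at h3
    have h5 : (a - 1) % 4 = 0 ∨ (a - 1) % 4 = 1 ∨ (a - 1) % 4 = 2 ∨ (a - 1) % 4 = 3 := by omega
    rcases h4 with h4 | h4 <;> rcases h5 with h5 | h5 | h5 | h5 <;> rw [h4, h5] at h3 <;> omega
  have ha5 : a % 5 = 3 := by
    have e1 : (p : ℤ) = 5 * (24 * n * (30 * k + 2) + 15 * (30 * k + 2) + 12 * k - 3) + 4 := by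
      rw [hpN, ← hNz]; ring
    generalize 24 * (n : ℤ) * (30 * k + 2) + 15 * (30 * k + 2) + 12 * k - 3 = u at e1
    rw [e1] at ha
    have : 4 * a = 5 * (h ^ 2 + 6 * k - u * a) + 2 := by linarith
    omega
  refine ⟨a, 20 * p, N, 0, 1, 10 * h, hapos, ?_, ?_, ?_, ?_, 0, 0, 1, ?_⟩
  · nlinarith
  · have e : (p : ℤ) * a = 5 * h ^ 2 + (30 * k + 2) := ha.symm
    linear_combination 20 * (N : ℤ) * e - 20 * hpN
  · intro x y z
    obtain ⟨a', rfl⟩ : ∃ a', a = 4 * a' + 1 := ⟨a / 4, by omega⟩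
    have e : tval (4 * a' + 1) (20 * p) N 0 1 (10 * h) x y z
      = 4 * (a' * x ^ 2 + 5 * p * y ^ 2 + (30 * n + 19) * z ^ 2 + 5 * h * x * y) + (x + z) ^ 2 := by
      rw [← hNz]; unfold tval; ring
    rw [e]
    generalize a' * x ^ 2 + 5 * p * y ^ 2 + (30 * n + 19) * z ^ 2 + 5 * h * x * y = w
    rcases Int.emod_two_eq_zero_or_one (x + z) with h0 | h0
    · obtain ⟨m, hm⟩ : ∃ m, x + z = 2 * m := ⟨(x + z) / 2, by omega⟩
      rw [hm]; left; ring_nf; omega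
    · obtain ⟨m, hm⟩ : ∃ m, x + z = 2 * m + 1 := ⟨(x + z) / 2, by omega⟩
      rw [hm]; right; ring_nf; omega
  · intro x y z
    obtain ⟨a', rfl⟩ : ∃ a', a = 5 * a' + 3 := ⟨a / 5, by omega⟩
    have e : tval (5 * a' + 3) (20 * p) N 0 1 (10 * h) x y z
      = 5 * (a' * x ^ 2 + 4 * p * y ^ 2 + (24 * n + 15) * z ^ 2 + 4 * h * x * y
        - 3 * x ^ 2 - 2 * x * z) + 2 * (z + 3 * x) ^ 2 := by
      rw [← hNz]; unfold tval; ring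
    rw [e]
    generalize a' * x ^ 2 + 4 * p * y ^ 2 + (24 * n + 15) * z ^ 2 + 4 * h * x * y
        - 3 * x ^ 2 - 2 * x * z = w
    obtain ⟨m, hm⟩ : ∃ m, z + 3 * x = 5 * m ∨ z + 3 * x = 5 * m + 1 ∨ z + 3 * x = 5 * m + 2 ∨
      z + 3 * x = 5 * m + 3 ∨ z + 3 * x = 5 * m + 4 := ⟨(z + 3 * x) / 5, by omega⟩
    rcases hm with hm | hm | hm | hm | hm <;> rw [hm] <;> ring_nf <;> omega
  · unfold tval; ring

theorem odd_rep_aux (Z Y : ℤ) (hZ : Z % 2 = 1) (hY : Y % 2 = 1) :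
    ∃ Z' Y' : ℤ, Z' % 2 = 1 ∧ Y' % 2 = 1 ∧ 3 * Z' ^ 2 + 5 * Y' ^ 2 = 4 * (3 * Z ^ 2 + 5 * Y ^ 2) := by
  obtain ⟨i, rfl⟩ : ∃ i, Z = 2 * i + 1 := ⟨Z / 2, by omega⟩
  obtain ⟨j, rfl⟩ : ∃ j, Y = 2 * j + 1 := ⟨Y / 2, by omega⟩
  rcases Int.emod_two_eq_zero_or_one (i + j) with h | h
  · exact ⟨i + 5 * j + 3, 3 * i - j + 1, by omega, by omega, by ring⟩
  · exact ⟨i - 5 * j - 2, 3 * i + j + 2, by omega, by omega, by ring⟩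

/-- A positive multiple of `8` of the form `3Z² + 5Y²` is so with `Z, Y` odd. -/
theorem odd_rep (n : ℕ) : ∀ Z Y : ℤ, 3 * Z ^ 2 + 5 * Y ^ 2 = 8 * (n : ℤ) → 0 < n →
    ∃ Z' Y' : ℤ, Z' % 2 = 1 ∧ Y' % 2 = 1 ∧ 3 * Z' ^ 2 + 5 * Y' ^ 2 = 8 * (n : ℤ) := by
  induction n using Nat.strong_induction_on with
  | _ n ih =>
    intro Z Y h hn
    rcases Int.emod_two_eq_zero_or_one Z with hZ | hZ <;>
      rcases Int.emod_two_eq_zero_or_one Y with hY | hY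
    · obtain ⟨i, rfl⟩ : ∃ i, Z = 2 * i := ⟨Z / 2, by omega⟩
      obtain ⟨j, rfl⟩ : ∃ j, Y = 2 * j := ⟨Y / 2, by omega⟩
      have h1 : 3 * i ^ 2 + 5 * j ^ 2 = 2 * (n : ℤ) := by linarith
      rcases Int.emod_two_eq_zero_or_one i with hi | hi <;>
        rcases Int.emod_two_eq_zero_or_one j with hj | hj
      · obtain ⟨u, rfl⟩ : ∃ u, i = 2 * u := ⟨i / 2, by omega⟩
        obtain ⟨v, rfl⟩ : ∃ v, j = 2 * v := ⟨j / 2, by omega⟩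
        rcases Int.emod_two_eq_zero_or_one (u + v) with huv | huv
        · obtain ⟨w, hw⟩ : ∃ w, u = v + 2 * w := ⟨(u - v) / 2, by omega⟩
          subst hw
          have h2 : (n : ℤ) = 4 * (4 * v ^ 2 + 6 * v * w + 6 * w ^ 2) := by linarith
          have h3 : 3 * (2 * (v + 2 * w)) ^ 2 + 5 * (2 * v) ^ 2 = 8 * ((n / 4 : ℕ) : ℤ) := by
            have : ((n / 4 : ℕ) : ℤ) = 4 * v ^ 2 + 6 * v * w + 6 * w ^ 2 := by
              generalize 4 * v ^ 2 + 6 * v * w + 6 * w ^ 2 = q at h2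
              omega
            rw [this]; ring
          have hn4 : n % 4 = 0 := by
            generalize 4 * v ^ 2 + 6 * v * w + 6 * w ^ 2 = q at h2
            omega
          obtain ⟨Z', Y', a1, a2, a3⟩ := ih (n / 4) (by omega) _ _ h3 (by omega)
          obtain ⟨Z'', Y'', b1, b2, b3⟩ := odd_rep_aux Z' Y' a1 a2
          exact ⟨Z'', Y'', b1, b2, by rw [b3, a3]; omega⟩
        · exact ⟨u + 5 * v, 3 * u - v, by omega, by omega, by linarith⟩
      · exfalso
        obtain ⟨u, rfl⟩ : ∃ u, i = 2 * u := ⟨i / 2, by omega⟩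
        obtain ⟨v, rfl⟩ : ∃ v, j = 2 * v + 1 := ⟨j / 2, by omega⟩
        ring_nf at h1; omega
      · exfalso
        obtain ⟨u, rfl⟩ : ∃ u, i = 2 * u + 1 := ⟨i / 2, by omega⟩
        obtain ⟨v, rfl⟩ : ∃ v, j = 2 * v := ⟨j / 2, by omega⟩
        ring_nf at h1; omega
      · obtain ⟨Z'', Y'', b1, b2, b3⟩ := odd_rep_aux i j hi hj
        exact ⟨Z'', Y'', b1, b2, by rw [b3, h1]; ring⟩
    · exfalso
      obtain ⟨u, rfl⟩ : ∃ u, Z = 2 * u := ⟨Z / 2, by omega⟩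
      obtain ⟨v, rfl⟩ : ∃ v, Y = 2 * v + 1 := ⟨Y / 2, by omega⟩
      ring_nf at h; omega
    · exfalso
      obtain ⟨u, rfl⟩ : ∃ u, Z = 2 * u + 1 := ⟨Z / 2, by omega⟩
      obtain ⟨v, rfl⟩ : ∃ v, Y = 2 * v := ⟨Y / 2, by omega⟩
      ring_nf at h; omega
    · exact ⟨Z, Y, hZ, hY, h⟩

theorem sq_mod_eight (x : ℤ) : (x % 2 = 1 ∧ x ^ 2 % 8 = 1) ∨
    (x % 2 = 0 ∧ (x ^ 2 % 8 = 0 ∨ x ^ 2 % 8 = 4)) := by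
  have : x % 8 = 0 ∨ x % 8 = 1 ∨ x % 8 = 2 ∨ x % 8 = 3 ∨ x % 8 = 4 ∨ x % 8 = 5 ∨ x % 8 = 6 ∨
    x % 8 = 7 := by omega
  rcases this with h | h | h | h | h | h | h | h <;> simp [pow_two, Int.mul_emod, h] <;> omega

theorem sq_mod_three (x : ℤ) : (x % 3 = 0 ∧ x ^ 2 % 3 = 0) ∨ (x % 3 ≠ 0 ∧ x ^ 2 % 3 = 1) := by
  have : x % 3 = 0 ∨ x % 3 = 1 ∨ x % 3 = 2 := by omega
  rcases this with h | h | h <;> simp [pow_two, Int.mul_emod, h]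

theorem sq_mod_five (x : ℤ) : (x % 5 = 0 ∧ x ^ 2 % 5 = 0) ∨
    ((x % 5 = 1 ∨ x % 5 = 4) ∧ x ^ 2 % 5 = 1) ∨ ((x % 5 = 2 ∨ x % 5 = 3) ∧ x ^ 2 % 5 = 4) := by
  have : x % 5 = 0 ∨ x % 5 = 1 ∨ x % 5 = 2 ∨ x % 5 = 3 ∨ x % 5 = 4 := by omega
  rcases this with h | h | h | h | h <;> simp [pow_two, Int.mul_emod, h]

/-- all-odd representation by `5W² + 5Y² + 3Z²` -/
theorem exists_odd (n : ℕ) : ∃ W Y Z : ℤ, W % 2 = 1 ∧ Y % 2 = 1 ∧ Z % 2 = 1 ∧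
    120 * (n : ℤ) + 77 = 5 * W ^ 2 + 5 * Y ^ 2 + 3 * Z ^ 2 := by
  obtain ⟨a, b, c, r, s, t, h⟩ := exists_TGood n
  obtain ⟨x, y, z, hx⟩ := h.reduced
  have key : ∀ W Y Z : ℤ, W % 2 = 1 → 120 * (n : ℤ) + 77 = 5 * W ^ 2 + 5 * Y ^ 2 + 3 * Z ^ 2 →
      ∃ W Y Z : ℤ, W % 2 = 1 ∧ Y % 2 = 1 ∧ Z % 2 = 1 ∧
      120 * (n : ℤ) + 77 = 5 * W ^ 2 + 5 * Y ^ 2 + 3 * Z ^ 2 := by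
    intro W Y Z hW hN
    have hW8 := sq_mod_eight W
    obtain ⟨m, hm⟩ : ∃ m : ℕ, 3 * Z ^ 2 + 5 * Y ^ 2 = 8 * (m : ℤ) := by
      refine ⟨((3 * Z ^ 2 + 5 * Y ^ 2) / 8).toNat, ?_⟩
      have h1 : 0 ≤ 3 * Z ^ 2 + 5 * Y ^ 2 := by positivity
      omega
    have hmpos : 0 < m := by
      rcases Nat.eq_zero_or_pos m with h0 | h0
      · subst h0; omega
      · exact h0
    obtain ⟨Z', Y', h1, h2, h3⟩ := odd_rep m Z Y hm hmpos
    exact ⟨W, Y', Z', hW, h2, h1, by linarith⟩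
  have hN : 120 * (n : ℤ) + 77 = 5 * x ^ 2 + 5 * (y + z) ^ 2 + 3 * (y - z) ^ 2 := by
    rw [hx]; ring
  refine key x (y + z) (y - z) ?_ hN
  by_contra hne
  obtain ⟨u, rfl⟩ : ∃ u, x = 2 * u := ⟨x / 2, by omega⟩
  ring_nf at hx
  omega

theorem exists_final (n : ℕ) : ∃ X W Z : ℤ, X % 2 = 1 ∧ W % 2 = 1 ∧ W % 3 ≠ 0 ∧ Z % 2 = 1 ∧
    (Z % 5 = 2 ∨ Z % 5 = 3) ∧ 120 * (n : ℤ) + 77 = 45 * X ^ 2 + 5 * W ^ 2 + 3 * Z ^ 2 := by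
  obtain ⟨W, Y, Z, hW, hY, hZ, h⟩ := exists_odd n
  have hZ5 : Z % 5 = 2 ∨ Z % 5 = 3 := by
    have := sq_mod_five Z
    omega
  have hW3 := sq_mod_three W
  have hY3 := sq_mod_three Y
  have hc : (W % 3 = 0 ∧ Y % 3 ≠ 0) ∨ (W % 3 ≠ 0 ∧ Y % 3 = 0) := by omega
  rcases hc with ⟨h1, h2⟩ | ⟨h1, h2⟩
  · obtain ⟨X, rfl⟩ : ∃ X, W = 3 * X := ⟨W / 3, by omega⟩
    exact ⟨X, Y, Z, by omega, hY, h2, hZ, hZ5, by linarith⟩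
  · obtain ⟨X, rfl⟩ : ∃ X, Y = 3 * X := ⟨Y / 3, by omega⟩
    exact ⟨X, W, Z, by omega, hW, h1, hZ, hZ5, by linarith⟩

theorem three_p3_add_p5_add_p7_universal (n : ℕ) :
    ∃ x y z : ℤ, (n : ℤ) = 3 * p3 x + p5 y + p7 z := by
  obtain ⟨X, W, Z, hX, hW, hW3, hZ, hZ5, h⟩ := exists_final n
  obtain ⟨x, hx⟩ : ∃ x, X = 2 * x + 1 := ⟨X / 2, by omega⟩
  obtain ⟨y, hy⟩ : ∃ y, W ^ 2 = (6 * y - 1) ^ 2 := by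
    have : W % 6 = 5 ∨ W % 6 = 1 := by omega
    rcases this with h6 | h6
    · exact ⟨(W + 1) / 6, by congr 1; omega⟩
    · refine ⟨(1 - W) / 6, ?_⟩
      rw [← neg_sq W]; congr 1; omega
  obtain ⟨z, hz⟩ : ∃ z, Z ^ 2 = (10 * z - 3) ^ 2 := by
    have : Z % 10 = 7 ∨ Z % 10 = 3 := by omega
    rcases this with h6 | h6
    · exact ⟨(Z + 3) / 10, by congr 1; omega⟩
    · refine ⟨(3 - Z) / 10, ?_⟩
      rw [← neg_sq Z]; congr 1; omega
  refine ⟨x, y, z, ?_⟩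
  have e3 : 2 * p3 x = x ^ 2 + x := by
    unfold p3
    have := (Int.even_mul_succ_self x).two_dvd
    have e : x * (x + 1) = x ^ 2 + x := by ring
    rw [e] at this
    omega
  have e5 : 2 * p5 y = 3 * y ^ 2 - y := by
    unfold p5
    have := (Int.even_mul_succ_self y).two_dvd
    have e : y * (y + 1) = y ^ 2 + y := by ring
    rw [e] at this
    omega
  have e7 : 2 * p7 z = 5 * z ^ 2 - 3 * z := by
    unfold p7
    have := (Int.even_mul_succ_self z).two_dvd
    have e : z * (z + 1) = z ^ 2 + z := by ring
    rw [e] at this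
    omega
  rw [hy, hz, hx] at h
  linarith
end
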